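/- Let P₁, P₂, d₁₂ > 0 and d₁₃² = 1/4 + (√3/2 + d₁₂)². If P₁/d₁₂² ≤ P₂/(1 + P₁/d₁₃²), then R_1-hop = R_omniscient = (1/2) log₂(1 + P₁/d₁₂²); that is, when the source–relay link is the bottleneck, one-hop myopic decode-forward achieves the same common rate as omniscient decode-forward. -/

import Mathlib

/-!
The relay's rate decreases in the power split `α`, so the omniscient rate is at most the relay's
rate at `α = 0`, which is `½ log₂(1 + P₁/d₁₂²)`. This is attained at `α = 0` as soon as
`P₁/d₁₂² ≤ P₁/d₁₃² + P₂`. In the one-hop scheme the destination treats the source's signal as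
interference, so its SNR is only `P₂/(1 + P₁/d₁₃²) ≤ P₁/d₁₃² + P₂`: a relay that is the bottleneck
of the one-hop scheme is also the bottleneck of the omniscient one.
-/

open Real

/-- Reception rate at the relay (node 2) under omniscient decode-forward for
the common message in the four-node Gaussian broadcast relay channel. -/
noncomputable def R2' (P1 d12 : ℝ) (a : ℝ) : ℝ :=
  (1 / 2) * Real.logb 2 (1 + (1 - a) * P1 / d12 ^ 2)

/-- Reception rate at destination 3 (and, by symmetry, destination 4) under
omniscient decode-forward, where `d13sq = d₁₃² = 1/4 + (√3/2 + d₁₂)²`. -/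
noncomputable def R3' (P1 P2 d13sq : ℝ) (a : ℝ) : ℝ :=
  (1 / 2) * Real.logb 2 (1 + P1 / d13sq + P2 + 2 * Real.sqrt (a * P1 * P2 / d13sq))

/-- Achievable common rate of omniscient decode-forward: the supremum over
power splits `α ∈ [0,1]` of `min{R'₂(α), R'₃(α)}`. -/
noncomputable def Romniscient (P1 P2 d12 d13sq : ℝ) : ℝ :=
  sSup {r : ℝ | ∃ a ∈ Set.Icc (0 : ℝ) 1,
    r = min (R2' P1 d12 a) (R3' P1 P2 d13sq a)}

/-- Achievable common rate of one-hop myopic decode-forward. -/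
noncomputable def R1hop (P1 P2 d12 d13sq : ℝ) : ℝ :=
  min ((1 / 2) * Real.logb 2 (1 + P1 / d12 ^ 2))
      ((1 / 2) * Real.logb 2 (1 + P2 / (1 + P1 / d13sq)))

/-- Shannon capacity, in bits per channel use, of the real Gaussian channel with signal-to-noise
ratio `snr`; every rate in this file is one of its values. -/
noncomputable def gaussianCapacity (snr : ℝ) : ℝ :=
  (1 / 2) * Real.logb 2 (1 + snr)

theorem gaussianCapacity_le_gaussianCapacity {x y : ℝ} (hx : -1 < x) (hxy : x ≤ y) :
    gaussianCapacity x ≤ gaussianCapacity y := by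
  have hlog : Real.logb 2 (1 + x) ≤ Real.logb 2 (1 + y) :=
    Real.logb_le_logb_of_le one_lt_two (by linarith) (by linarith)
  exact mul_le_mul_of_nonneg_left hlog one_half_pos.le

theorem le_add_of_le_div_one_add {x y z : ℝ} (hx : 0 ≤ x) (hy : 0 ≤ y) (h : x ≤ z / (1 + y)) :
    x ≤ y + z :=
  calc
    x ≤ x * (1 + y) := le_mul_of_one_le_right hx (by linarith)
    _ ≤ z := (le_div_iff₀ (by linarith)).mp h
    _ ≤ y + z := le_add_of_nonneg_left hy

section Rates

variable {P1 P2 d12 d13sq : ℝ}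

theorem R2'_zero : R2' P1 d12 0 = gaussianCapacity (P1 / d12 ^ 2) := by
  rw [R2', gaussianCapacity, sub_zero, one_mul]

theorem R3'_zero : R3' P1 P2 d13sq 0 = gaussianCapacity (P1 / d13sq + P2) := by
  simp only [R3', gaussianCapacity, zero_mul, zero_div, Real.sqrt_zero, mul_zero, add_zero,
    add_assoc]

theorem antitoneOn_R2' (hP1 : 0 ≤ P1) : AntitoneOn (R2' P1 d12) (Set.Iic 1) := by
  intro a _ b hb hab
  have hsnr : 0 ≤ (1 - b) * P1 / d12 ^ 2 :=
    div_nonneg (mul_nonneg (sub_nonneg.mpr hb) hP1) (sq_nonneg d12)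
  exact gaussianCapacity_le_gaussianCapacity (by linarith) (by gcongr)

theorem R1hop_eq_gaussianCapacity (hP1 : 0 ≤ P1)
    (h : P1 / d12 ^ 2 ≤ P2 / (1 + P1 / d13sq)) :
    R1hop P1 P2 d12 d13sq = gaussianCapacity (P1 / d12 ^ 2) := by
  have hsnr : 0 ≤ P1 / d12 ^ 2 := by positivity
  exact min_eq_left (gaussianCapacity_le_gaussianCapacity (by linarith) h)

theorem Romniscient_eq_R2'_zero (hP1 : 0 ≤ P1) (h : R2' P1 d12 0 ≤ R3' P1 P2 d13sq 0) :
    Romniscient P1 P2 d12 d13sq = R2' P1 d12 0 := by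
  refine IsGreatest.csSup_eq ⟨⟨0, Set.left_mem_Icc.mpr zero_le_one, (min_eq_left h).symm⟩, ?_⟩
  rintro _ ⟨a, ⟨ha0, ha1⟩, rfl⟩
  exact (min_le_left _ _).trans (antitoneOn_R2' hP1 (Set.mem_Iic.mpr zero_le_one) ha1 ha0)

theorem Romniscient_eq_gaussianCapacity (hP1 : 0 ≤ P1) (h : P1 / d12 ^ 2 ≤ P1 / d13sq + P2) :
    Romniscient P1 P2 d12 d13sq = gaussianCapacity (P1 / d12 ^ 2) := by
  have hsnr : 0 ≤ P1 / d12 ^ 2 := by positivity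
  have hrelay : R2' P1 d12 0 ≤ R3' P1 P2 d13sq 0 := by
    rw [R2'_zero, R3'_zero]
    exact gaussianCapacity_le_gaussianCapacity (by linarith) h
  rw [Romniscient_eq_R2'_zero hP1 hrelay, R2'_zero]

theorem myopic_eq_omniscient_brc_bottleneck_general (hP1 : 0 ≤ P1) (hd12 : 0 < d12)
    (hd13 : 0 < d13sq) (hbottleneck : P1 / d12 ^ 2 ≤ P2 / (1 + P1 / d13sq)) :
    R1hop P1 P2 d12 d13sq = gaussianCapacity (P1 / d12 ^ 2)
    ∧ Romniscient P1 P2 d12 d13sq = gaussianCapacity (P1 / d12 ^ 2) := by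
  have hrelay : 0 ≤ P1 / d12 ^ 2 := by positivity
  have hdirect : 0 ≤ P1 / d13sq := by positivity
  exact ⟨R1hop_eq_gaussianCapacity hP1 hbottleneck,
    Romniscient_eq_gaussianCapacity hP1 (le_add_of_le_div_one_add hrelay hdirect hbottleneck)⟩

end Rates

/-- When the source–relay link is the bottleneck, i.e.
`P₁/d₁₂² ≤ P₂/(1 + P₁/d₁₃²)`, one-hop myopic decode-forward achieves the same
common rate `½ log₂(1 + P₁/d₁₂²)` as omniscient decode-forward. -/
theorem myopic_eq_omniscient_brc_bottleneck
    (P1 P2 d12 : ℝ) (hP1 : 0 < P1) (hP2 : 0 < P2) (hd12 : 0 < d12)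
    (d13sq : ℝ) (hd13 : d13sq = 1 / 4 + (Real.sqrt 3 / 2 + d12) ^ 2)
    (hbottleneck : P1 / d12 ^ 2 ≤ P2 / (1 + P1 / d13sq)) :
    R1hop P1 P2 d12 d13sq = (1 / 2) * Real.logb 2 (1 + P1 / d12 ^ 2)
    ∧ Romniscient P1 P2 d12 d13sq = (1 / 2) * Real.logb 2 (1 + P1 / d12 ^ 2) := by
  have hd13sq : 0 < d13sq := by rw [hd13]; positivity
  exact myopic_eq_omniscient_brc_bottleneck_general hP1.le hd12 hd13sq hbottleneck
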